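/- arXiv:1203.6498 — 4 statements merged into one kernel-verified Lean document; each statement's English description precedes it below -/
import Mathlib

section
/- Let K ⊆ F be a field extension and let t be a nonzero element of F. Then t is algebraic over K if and only if for every linearly ordered commutative group with zero Γ₀ and every valuation w : F → Γ₀ whose restriction to K is trivial (meaning w(x) = 1 for every nonzero x ∈ K), one has w(t) = 1. -/
/-!
If `w` is trivial on `K` and `w t ≠ 1`, then (replacing `t` by `t⁻¹`) `w (p(t)) = w t ^ deg p` for
every nonzero polynomial `p` over `K`, so `t` is transcendental; this is
`Valuation.transcendental_of_ne_one`.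

Conversely, let `t` be transcendental over `K`. Since the value group is required to live in `Type`
while `F` lives in an arbitrary universe, it is not enough to take the valuation of any valuation
ring of `F` that contains `K` and not `t`: its value group may be too large. A valuation with
values in `ℝ≥0` is built instead. Extend `t` to a transcendence basis of `F/K` and let `E` be the
field generated over `K` by the other basis elements, so that `F/E` has transcendence degree one
and `t` is transcendental over `E` (`exists_intermediateField_isTranscendenceBasis`). Some valuation
`v` of `F` is trivial on `E` and satisfies `1 < v t` (`exists_valuation_one_lt`). Whenever
`1 < v y`, the element `y` is transcendental over `E`, so `F` is algebraic over `E[y]`, which forces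
every value of `v` to be bounded by a power of `v y` (`exists_le_pow_of_isAlgebraic`). Hence the
value group of `v` is archimedean and embeds into `ℝ≥0` by Hölder's theorem.
-/

open Polynomial NNReal

/-- In an algebraic equation for `x` over `E[y]`, all nonzero coefficients have value between `1`
and a fixed power of `v y`; if `v x` exceeded every power of `v y`, the leading term would be
strictly dominant and the equation could not hold. -/
theorem exists_le_pow_of_isAlgebraic {E F Γ : Type*} [Field E] [Field F] [Algebra E F]
    [LinearOrderedCommGroupWithZero Γ] (v : Valuation F Γ) [v.IsTrivialOn E] {x y : F}
    (hy : 1 < v y) (hx : IsAlgebraic (Algebra.adjoin E {y}) x) : ∃ n : ℕ, v x ≤ v y ^ n := by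
  by_contra! h
  have hx1 : 1 < v x := by simpa using h 0
  have hcoeff (c : Algebra.adjoin E {y}) (hc : c ≠ 0) : ∃ n : ℕ, v (c : F) = v y ^ n := by
    obtain ⟨q, hq⟩ : ∃ q : E[X], aeval y q = c := by
      simpa [Algebra.adjoin_singleton_eq_range_aeval] using c.2
    have hq0 : q ≠ 0 := by
      rintro rfl
      exact hc (Subtype.ext (by simpa using hq.symm))
    exact ⟨q.natDegree, hq ▸
      valuation_aeval_eq_valuation_X_pow_natDegree_of_one_lt_valuation_X y hy hq0⟩
  obtain ⟨p, hp, hpx⟩ := hx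
  obtain ⟨m, hm⟩ := hcoeff p.leadingCoeff (leadingCoeff_ne_zero.mpr hp)
  have hlead : v x ^ p.natDegree ≤ v ((p.leadingCoeff : F) * x ^ p.natDegree) := by
    rw [map_mul, map_pow, hm]
    exact le_mul_of_one_le_left' (one_le_pow₀ hy.le)
  have hlead0 : 0 < v x ^ p.natDegree := pow_pos (zero_lt_one.trans hx1) _
  have hsum := v.map_sum_eq_of_lt (s := Finset.range (p.natDegree + 1))
    (f := fun i ↦ (p.coeff i : F) * x ^ i) (j := p.natDegree) (by simp) (by
      intro i hi
      have hi' : i + 1 ≤ p.natDegree := by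
        simp only [Finset.mem_sdiff, Finset.mem_range, Finset.mem_singleton] at hi
        omega
      refine lt_of_lt_of_le ?_ hlead
      by_cases h0 : p.coeff i = 0
      · simpa [h0] using hlead0
      obtain ⟨n, hn⟩ := hcoeff _ h0
      calc v ((p.coeff i : F) * x ^ i) = v y ^ n * v x ^ i := by rw [map_mul, map_pow, hn]
        _ < v x * v x ^ i :=
          mul_lt_mul_of_pos_right (h n) (pow_pos (zero_lt_one.trans hx1) _)
        _ = v x ^ (i + 1) := (pow_succ' _ _).symm
        _ ≤ v x ^ p.natDegree := pow_le_pow_right₀ hx1.le hi')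
  rw [aeval_eq_sum_range] at hpx
  simp only [Algebra.smul_def] at hpx
  erw [hpx] at hsum
  rw [map_zero] at hsum
  exact absurd (hlead0.trans_le hlead) (by rw [coeff_natDegree] at hsum; rw [← hsum]; simp)

theorem isAlgebraic_of_le_restrictScalars {K E F : Type*} [Field K] [Field E] [Field F]
    [Algebra K F] [Algebra E F] [Algebra K E] [IsScalarTower K E F] {A : Subalgebra K F}
    {S : Subalgebra E F} (hle : A ≤ S.restrictScalars K) (hA : Algebra.IsAlgebraic A F) :
    Algebra.IsAlgebraic S F := by
  let f : A →+* S := A.subtype.codRestrict S fun a ↦ hle a.2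
  let : Algebra A S := f.toAlgebra
  have : IsScalarTower A S F := .of_algebraMap_eq fun _ ↦ rfl
  have hf : Function.Injective (algebraMap A S) := fun a b hab ↦
    Subtype.ext (congrArg (fun z : S ↦ (z : F)) hab)
  exact ⟨fun x ↦ (hA.1 x).extendScalars hf⟩

theorem exists_intermediateField_isTranscendenceBasis {K F : Type*} [Field K] [Field F]
    [Algebra K F] {t : F} (ht : Transcendental K t) :
    ∃ E : IntermediateField K F, IsTranscendenceBasis E (fun _ : Unit ↦ t) := by
  obtain ⟨B, htB, hB⟩ := exists_isTranscendenceBasis_superset (R := K) (s := {t})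
    ((algebraicIndependent_singleton_iff (⟨t, rfl⟩ : ({t} : Set F))).mpr ht)
  rw [Set.singleton_subset_iff] at htB
  let E := IntermediateField.adjoin K (B \ {t})
  refine ⟨E, ?_⟩
  have htE : Transcendental E t := by
    rw [IntermediateField.transcendental_adjoin_iff]
    have := hB.1.transcendental_adjoin (s := {b | b.1 ≠ t}) (i := ⟨t, htB⟩) (by simp)
    have himage : ((↑) : B → F) '' {b | b.1 ≠ t} = B \ {t} := by
      ext
      simp [and_comm]
    rwa [himage] at this
  have hind : AlgebraicIndependent E (fun _ : Unit ↦ t) :=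
    algebraicIndependent_unique_type_iff.mpr htE
  refine hind.isTranscendenceBasis_iff_isAlgebraic.mpr ?_
  have hle : Algebra.adjoin K (Set.range ((↑) : B → F)) ≤
      (Algebra.adjoin E (Set.range fun _ : Unit ↦ t)).restrictScalars K := by
    refine Algebra.adjoin_le ?_
    rintro _ ⟨b, rfl⟩
    rw [SetLike.mem_coe, Subalgebra.mem_restrictScalars]
    by_cases hb : b.1 = t
    · exact Algebra.subset_adjoin ⟨(), hb.symm⟩
    · exact Subalgebra.algebraMap_mem (Algebra.adjoin E (Set.range fun _ : Unit ↦ t))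
        ⟨b.1, IntermediateField.subset_adjoin _ _ ⟨b.2, hb⟩⟩
  exact isAlgebraic_of_le_restrictScalars hle hB.isAlgebraic

/-- The integral closure of `E` in `F` is the intersection of the valuation rings containing it, and
a transcendental element lies outside it. -/
theorem exists_valuation_one_lt {E F : Type*} [Field E] [Field F] [Algebra E F] {t : F}
    (ht : Transcendental E t) :
    ∃ V : ValuationSubring F, V.valuation.IsTrivialOn E ∧ 1 < V.valuation t := by
  have htR : t ∉ (integralClosure E F).toSubring := fun h ↦
    ht (IsIntegral.isAlgebraic ((mem_integralClosure_iff E F).mp h))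
  have : IsIntegrallyClosedIn (integralClosure E F).toSubring F :=
    inferInstanceAs (IsIntegrallyClosedIn (integralClosure E F) F)
  obtain ⟨V, hV, htV⟩ := Subring.exists_le_valuationSubring_of_isIntegrallyClosedIn htR
  have hE (a : E) : V.valuation (algebraMap E F a) ≤ 1 :=
    (V.valuation_le_one_iff _).mpr (hV ((integralClosure E F).algebraMap_mem a))
  refine ⟨V, ⟨fun a ha ↦ (hE a).antisymm ?_⟩, ?_⟩
  · have := hE a⁻¹
    rw [map_inv₀, map_inv₀] at this
    exact (inv_le_one₀ (by simpa [zero_lt_iff] using ha)).mp this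
  · rwa [← not_le, V.valuation_le_one_iff]

/-- A nonzero element `t` of a field extension `F/K` is algebraic over `K` if and only if every
valuation on `F` that is trivial on `K` (i.e. takes the value `1` at every nonzero element of `K`)
takes the value `1` at `t`. -/
theorem isAlgebraic_iff_forall_trivialOn_valuation_eq_one
    {K F : Type*} [Field K] [Field F] [Algebra K F] (t : F) (ht : t ≠ 0) :
    IsAlgebraic K t ↔
      ∀ (Γ₀ : Type) [LinearOrderedCommGroupWithZero Γ₀] (w : Valuation F Γ₀),
        (∀ x : K, x ≠ 0 → w (algebraMap K F x) = 1) → w t = 1 := by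
  refine ⟨fun halg Γ₀ _ w hw ↦ ?_, fun h ↦ ?_⟩
  · by_contra hne
    have : w.IsTrivialOn K := ⟨hw⟩
    exact w.transcendental_of_ne_one K t ht hne halg
  · by_contra htr
    obtain ⟨E, hE⟩ := exists_intermediateField_isTranscendenceBasis htr
    obtain ⟨V, hVE, hVt⟩ := exists_valuation_one_lt (hE.1.transcendental ())
    set v := V.valuation
    have hbound (x y : F) (hy : 1 < v y) : ∃ n : ℕ, v x ≤ v y ^ n := by
      have hy0 : y ≠ 0 := by
        rintro rfl
        simp at hy
      have hyE : Transcendental E y := v.transcendental_of_ne_one E y hy0 hy.ne'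
      have hyB : IsTranscendenceBasis E (fun _ : Unit ↦ y) :=
        ((algebraicIndependent_unique_type_iff).mpr
          hyE).isTranscendenceBasis_of_lift_trdeg_le_of_finite hE.lift_cardinalMk_eq_trdeg.ge
      have := hyB.isAlgebraic.1 x
      rw [Set.range_const] at this
      exact exists_le_pow_of_isAlgebraic v hy this
    have : v.IsNontrivial := ⟨t, by simpa using ht, hVt.ne'⟩
    have harch : MulArchimedean (MonoidWithZeroHom.ValueGroup₀ (.ofClass v)) := by
      refine ⟨fun a b hb ↦ ?_⟩
      obtain ⟨x, rfl⟩ := MonoidWithZeroHom.ValueGroup₀.restrict₀_surjective _ a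
      obtain ⟨y, rfl⟩ := MonoidWithZeroHom.ValueGroup₀.restrict₀_surjective _ b
      rw [← v.restrict_def] at hb ⊢
      rw [← v.restrict_def]
      have hy : 1 < v y := by
        rwa [← not_le, v.restrict_le_one_iff, not_le] at hb
      obtain ⟨n, hn⟩ := hbound x y hy
      exact ⟨n, by rwa [← map_pow, v.restrict_le_iff, map_pow]⟩
    obtain ⟨hr⟩ := Valuation.nonempty_rankOne_iff_mulArchimedean.mpr harch
    let w : Valuation F ℝ≥0 := v.restrict.map hr.hom' hr.strictMono'.monotone
    have hw (x : F) : w x = 1 ↔ v x = 1 := by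
      rw [← v.restrict_eq_one_iff, ← hr.strictMono'.injective.eq_iff, map_one]
      rfl
    refine hVt.ne' ((hw t).mp (h ℝ≥0 w fun x hx ↦ (hw _).mpr ?_))
    exact hVE.eq_one (algebraMap K E x) (by simpa using hx)
end

section
/- Let K be a field, v : K → Γ₀ a valuation, A a nontrivial commutative K-algebra, and L a Galois field extension of K. Let v' : L → Γ'₀ be a valuation whose restriction to K is equivalent to v, and let w : A → Ω₀ be a valuation whose restriction to K (along the structure map) is equivalent to v. Then there exist a linearly ordered commutative group with zero Δ₀ and a valuation W : L ⊗_K A → Δ₀ whose restriction to L (along x ↦ x ⊗ 1) is equivalent to v' and whose restriction to A (along a ↦ 1 ⊗ a) is equivalent to w. -/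
/-!
The valuation `W` is obtained by embedding `L` and the residue field `M` of `A` at the support
of `w` into a common valued field; no property of the extension `L / K` is needed.

Let `R`, `S`, `T` be the valuation rings of `v` on `K`, of `v'` on `L` and of `w` on `M`.
* The residue fields of `S` and `T` are extensions of the residue field of `R`, so their tensor
  product is nonzero; a prime of it pulls back to a prime `q` of `S ⊗[R] T` lying over both maximal
  ideals.
* `S` and `T` are torsion-free over the valuation ring `R`, hence flat, and therefore so is
  `S ⊗[R] T` over `S` and over `T`.  By going down, a minimal prime `q₀ ≤ q` contracts to `0`
  in `S` and in `T`, so `S` and `T` embed in the residue field `F` of `q₀`.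
* Some valuation ring `V` of `F` dominates the image of the localization of `S ⊗[R] T` at `q`.
  It dominates `S` and `T`, and valuation rings are maximal for domination, so the valuation of
  `V` induces `v'` on `L` and `w` on `M`.

The maps `L → F` and `A → M → F` agree on `K`, and `W` is the pullback of the valuation of `V`
along the resulting map `L ⊗[K] A → F`.
-/

open scoped TensorProduct

universe u

open IsLocalRing

/-- Torsion-free modules over a valuation ring are flat, applied to an extension of valuation
rings. -/
lemma flat_valuationSubring_of_hasExtension {K L Γ₀ Γ₁ : Type*} [Field K] [Field L] [Algebra K L]
    [LinearOrderedCommGroupWithZero Γ₀] [LinearOrderedCommGroupWithZero Γ₁]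
    (v : Valuation K Γ₀) (v' : Valuation L Γ₁) [v.HasExtension v'] :
    Module.Flat v.valuationSubring v'.valuationSubring := by
  have : Module.IsTorsionFree v.valuationSubring v'.valuationSubring :=
    inferInstanceAs (Module.IsTorsionFree v.integer v'.integer)
  rw [Module.Flat.flat_iff_torsion_eq_bot_of_isBezout]
  exact (Submodule.isTorsionFree_iff_torsion_eq_bot).mp this

/-- Two local homomorphisms out of `R` have a prime of `S ⊗[R] T` over both closed points. -/
lemma exists_prime_over_maximalIdeals {R S T : Type*} [CommRing R] [CommRing S] [CommRing T]
    [IsLocalRing R] [IsLocalRing S] [IsLocalRing T] [Algebra R S] [Algebra R T]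
    [IsLocalHom (algebraMap R S)] [IsLocalHom (algebraMap R T)] :
    ∃ q : Ideal (S ⊗[R] T), q.IsPrime ∧ (∀ s ∈ maximalIdeal S, s ⊗ₜ[R] (1 : T) ∈ q) ∧
      ∀ t ∈ maximalIdeal T, (1 : S) ⊗ₜ[R] t ∈ q := by
  let E := ResidueField S ⊗[ResidueField R] ResidueField T
  obtain ⟨N, hN⟩ := Ideal.exists_maximal E
  let f : S →ₐ[R] E :=
    ((Algebra.TensorProduct.includeLeft : ResidueField S →ₐ[ResidueField R] E).restrictScalars
      R).comp (IsScalarTower.toAlgHom R S (ResidueField S))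
  let g : T →ₐ[R] E :=
    ((Algebra.TensorProduct.includeRight : ResidueField T →ₐ[ResidueField R] E).restrictScalars
      R).comp (IsScalarTower.toAlgHom R T (ResidueField T))
  refine ⟨N.comap (Algebra.TensorProduct.productMap f g), Ideal.comap_isPrime _ _, ?_, ?_⟩
  · intro s hs
    have : residue S s = 0 := (residue_eq_zero_iff s).mpr hs
    simp [f, this]
  · intro s hs
    have : residue T s = 0 := (residue_eq_zero_iff s).mpr hs
    simp [g, this]

/-- By going down, a minimal prime of a flat algebra over a domain contracts to zero. -/
lemma comap_eq_bot_of_mem_minimalPrimes {S D : Type*} [CommRing S] [IsDomain S] [CommRing D]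
    [Algebra S D] [Module.Flat S D] {q : Ideal D} (hq : q ∈ minimalPrimes D) :
    q.comap (algebraMap S D) = ⊥ := by
  have := hq.1.1
  obtain ⟨P, hle, hP, hP'⟩ := q.exists_ideal_le_liesOver_of_le (p := (⊥ : Ideal S))
    (q := q.under S) bot_le
  have h : P = q := le_antisymm hle (hq.2 ⟨hP, bot_le⟩ hle)
  rw [← h]
  exact hP'.over.symm

/-- Given primes `q₀ ≤ q` of `D`, some valuation ring of a field receiving `D / q₀` contains the
image of `D` and has the image of `q` in its maximal ideal. -/
lemma exists_valuationSubring_of_le {D : Type u} [CommRing D] {q₀ q : Ideal D} [q₀.IsPrime]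
    [q.IsPrime] (h : q₀ ≤ q) :
    ∃ (F : Type u) (_ : Field F) (f : D →+* F) (V : ValuationSubring F),
      RingHom.ker f = q₀ ∧ (∀ d, f d ∈ V) ∧ ∀ d ∈ q, V.valuation (f d) < 1 := by
  have hu (y : q.primeCompl) : IsUnit (algebraMap D q₀.ResidueField y) := by
    rw [isUnit_iff_ne_zero, ne_eq, Ideal.algebraMap_residueField_eq_zero]
    exact fun hy ↦ y.2 (h hy)
  let g : Localization.AtPrime q →+* q₀.ResidueField := IsLocalization.lift hu
  have hg (d : D) : g (algebraMap D _ d) = algebraMap D q₀.ResidueField d :=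
    IsLocalization.lift_eq hu d
  obtain ⟨V, hV, hloc⟩ := IsLocalRing.exists_factor_valuationRing g
  refine ⟨q₀.ResidueField, inferInstance, algebraMap D _, V, Ideal.ker_algebraMap_residueField q₀,
    fun d ↦ hg d ▸ hV _, fun d hd ↦ ?_⟩
  have hd' : algebraMap D (Localization.AtPrime q) d ∈ maximalIdeal _ :=
    (IsLocalization.AtPrime.to_map_mem_maximal_iff _ q d).mpr hd
  have hnu : ¬ IsUnit (g.codRestrict V.toSubring hV (algebraMap D _ d)) :=
    fun hu ↦ hd' (isUnit_of_map_unit _ _ hu)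
  have := (V.valuation_lt_one_iff (g.codRestrict V.toSubring hV (algebraMap D _ d))).mp hnu
  rw [← hg]
  exact this

/-- A valuation ring `V` dominating the valuation ring of `v` induces `v` up to equivalence. -/
lemma exists_lift_isEquiv {L F Γ : Type*} [Field L] [Field F] [LinearOrderedCommGroupWithZero Γ]
    (v : Valuation L Γ) (f : v.valuationSubring →+* F) (hf : Function.Injective f)
    (V : ValuationSubring F) (hV : ∀ s, f s ∈ V)
    (hm : ∀ s ∈ maximalIdeal v.valuationSubring, V.valuation (f s) < 1) :
    ∃ φ : L →+* F, (∀ s : v.valuationSubring, φ s = f s) ∧ (V.valuation.comap φ).IsEquiv v := by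
  let φ : L →+* F := IsFractionRing.lift hf
  have hφ (s : v.valuationSubring) : φ s = f s := IsFractionRing.lift_algebraMap hf s
  refine ⟨φ, hφ, Valuation.isEquiv_of_val_le_one fun {x} ↦ ⟨fun hx ↦ ?_, fun hx ↦ ?_⟩⟩
  · -- If `x` lies outside the ring of `v`, then `x⁻¹` lies in its maximal ideal, hence in that
    -- of `V`, so `x` cannot lie in `V`.
    by_contra! hx'
    have hx0 : x ≠ 0 := by rintro rfl; simp at hx'
    have hlt : v x⁻¹ < 1 := by
      rw [map_inv₀]; exact inv_lt_one_of_one_lt₀ hx'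
    have h1 := hm ⟨x⁻¹, hlt.le⟩ (by
      rw [Valuation.mem_maximalIdeal_iff]
      exact hlt)
    rw [← hφ] at h1
    simp only [map_inv₀, Valuation.comap_apply] at h1 hx
    have h2 : 0 < V.valuation (φ x) := by
      rw [zero_lt_iff, Valuation.ne_zero_iff]
      simpa using hx0
    exact absurd ((inv_lt_one₀ h2).mp h1) hx.not_gt
  · rw [Valuation.comap_apply, V.valuation_le_one_iff, hφ ⟨x, hx⟩]
    exact hV _

/-- Amalgamation of valued fields: two valued extensions of `K` embed over `K` in a common
valued field. -/
lemma exists_valued_amalgam {K L M : Type u} [Field K] [Field L] [Field M] [Algebra K L]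
    [Algebra K M] {Γ₀ Γ₁ Γ₂ : Type*} [LinearOrderedCommGroupWithZero Γ₀]
    [LinearOrderedCommGroupWithZero Γ₁] [LinearOrderedCommGroupWithZero Γ₂]
    (v : Valuation K Γ₀) (v' : Valuation L Γ₁) (w : Valuation M Γ₂)
    [v.HasExtension v'] [v.HasExtension w] :
    ∃ (F : Type u) (_ : Field F) (φ : L →+* F) (ψ : M →+* F) (V : ValuationSubring F),
      φ.comp (algebraMap K L) = ψ.comp (algebraMap K M) ∧
      (V.valuation.comap φ).IsEquiv v' ∧ (V.valuation.comap ψ).IsEquiv w := by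
  let R := v.valuationSubring
  let S := v'.valuationSubring
  let T := w.valuationSubring
  have : Module.Flat R S := flat_valuationSubring_of_hasExtension v v'
  have : Module.Flat R T := flat_valuationSubring_of_hasExtension v w
  obtain ⟨q, hq, hqS, hqT⟩ := exists_prime_over_maximalIdeals (R := R) (S := S) (T := T)
  obtain ⟨q₀, hq₀, hle⟩ := Ideal.exists_minimalPrimes_le (bot_le : ⊥ ≤ q)
  have := hq₀.1.1
  obtain ⟨F, _, f, V, hker, hV, hm⟩ := exists_valuationSubring_of_le hle
  let fS : S →+* F := f.comp Algebra.TensorProduct.includeLeftRingHom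
  let fT : T →+* F := f.comp
    (Algebra.TensorProduct.includeRight : T →ₐ[R] S ⊗[R] T).toRingHom
  have hS : Function.Injective fS := by
    rw [RingHom.injective_iff_ker_eq_bot, ← RingHom.comap_ker, hker]
    exact comap_eq_bot_of_mem_minimalPrimes (S := S) hq₀
  have hT : Function.Injective fT := by
    rw [RingHom.injective_iff_ker_eq_bot, ← RingHom.comap_ker, hker]
    let := Algebra.TensorProduct.rightAlgebra (R := R) (A := S) (B := T)
    have : Module.Flat T (S ⊗[R] T) :=
      Module.Flat.isBaseChange R T S _ (Algebra.IsPushout.out (R := R) (S := T) (R' := S))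
    exact comap_eq_bot_of_mem_minimalPrimes (S := T) hq₀
  obtain ⟨φ, hφ, hφv⟩ := exists_lift_isEquiv v' fS hS V (fun _ ↦ hV _) (fun s hs ↦ hm _ (hqS s hs))
  obtain ⟨ψ, hψ, hψv⟩ := exists_lift_isEquiv w fT hT V (fun _ ↦ hV _) (fun s hs ↦ hm _ (hqT s hs))
  refine ⟨F, inferInstance, φ, ψ, V, ?_, hφv, hψv⟩
  apply IsLocalization.ringHom_ext (nonZeroDivisors R)
  ext r
  have h1 : φ (algebraMap K L (r : K)) = f (algebraMap R S r ⊗ₜ 1) := hφ (algebraMap R S r)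
  have h2 : ψ (algebraMap K M (r : K)) = f (1 ⊗ₜ algebraMap R T r) := hψ (algebraMap R T r)
  change φ (algebraMap K L (r : K)) = ψ (algebraMap K M (r : K))
  rw [h1, h2, Algebra.algebraMap_eq_smul_one, Algebra.algebraMap_eq_smul_one,
    TensorProduct.smul_tmul]

/-- A valuation on a ring is the pullback of a valuation on the residue field of its support. -/
lemma exists_valuation_residueField {A : Type*} [CommRing A] {Γ : Type*}
    [LinearOrderedCommGroupWithZero Γ] (w : Valuation A Γ) :
    ∃ w' : Valuation (FractionRing (A ⧸ w.supp)) Γ,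
      ∀ a, w' (algebraMap A (FractionRing (A ⧸ w.supp)) a) = w a := by
  have hS : nonZeroDivisors (A ⧸ w.supp) ≤ (w.onQuot le_rfl).supp.primeCompl := by
    intro x hx hx'
    rw [SetLike.mem_coe, Valuation.supp_quot_supp] at hx'
    exact nonZeroDivisors.ne_zero hx hx'
  refine ⟨(w.onQuot le_rfl).extendToLocalization hS _, fun a ↦ ?_⟩
  rw [IsScalarTower.algebraMap_apply A (A ⧸ w.supp),
    Valuation.extendToLocalization_apply_map_apply]
  rfl

/-- Let `v` be a valuation on a field `K`, `A` a nontrivial commutative `K`-algebra and `L` a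
Galois extension of `K`.  Given a valuation `v'` on `L` extending `v` (up to equivalence) and a
valuation `w` on `A` extending `v` (up to equivalence), there is a valuation `W` on `L ⊗[K] A`
whose restriction to `L` is equivalent to `v'` and whose restriction to `A` is equivalent
to `w`. -/
theorem exists_valuation_on_tensor_extending
    {K L A : Type u} [Field K] [Field L] [Algebra K L] [IsGalois K L]
    [CommRing A] [Nontrivial A] [Algebra K A]
    {Γ₀ Γ'₀ Ω₀ : Type*} [LinearOrderedCommGroupWithZero Γ₀]
    [LinearOrderedCommGroupWithZero Γ'₀] [LinearOrderedCommGroupWithZero Ω₀]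
    (v : Valuation K Γ₀) (v' : Valuation L Γ'₀) (w : Valuation A Ω₀)
    (hv' : (v'.comap (algebraMap K L)).IsEquiv v)
    (hw : (w.comap (algebraMap K A)).IsEquiv v) :
    ∃ (Δ₀ : Type u) (_ : LinearOrderedCommGroupWithZero Δ₀)
      (W : Valuation (L ⊗[K] A) Δ₀),
      (W.comap (Algebra.TensorProduct.includeLeft (R := K) (S := K) (A := L)
        (B := A)).toRingHom).IsEquiv v' ∧
      (W.comap (Algebra.TensorProduct.includeRight (R := K) (A := L)
        (B := A)).toRingHom).IsEquiv w := by
  obtain ⟨w', hw'⟩ := exists_valuation_residueField w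
  let M := FractionRing (A ⧸ w.supp)
  have hKM (x : K) : algebraMap K M x = algebraMap A M (algebraMap K A x) :=
    IsScalarTower.algebraMap_apply K A M x
  have : v.HasExtension v' := ⟨hv'.symm⟩
  have : v.HasExtension w' := ⟨fun x y ↦ by
    rw [Valuation.comap_apply, Valuation.comap_apply, hKM, hKM, hw', hw']
    exact hw.symm x y⟩
  obtain ⟨F, _, φ, ψ, V, hcomp, hφ, hψ⟩ := exists_valued_amalgam v v' w'
  let : Algebra K F := (φ.comp (algebraMap K L)).toAlgebra
  let f : L →ₐ[K] F := ⟨φ, fun _ ↦ rfl⟩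
  let g : A →ₐ[K] F := ⟨ψ.comp (algebraMap A M), fun x ↦
    (congrArg ψ (hKM x)).symm.trans (RingHom.congr_fun hcomp x).symm⟩
  let p : L ⊗[K] A →ₐ[K] F := Algebra.TensorProduct.productMap f g
  refine ⟨V.ValueGroup, inferInstance, V.valuation.comap p.toRingHom, ?_, ?_⟩
  · intro x y
    have h (x : L) : p (x ⊗ₜ 1) = φ x := by simp [p, f]
    change V.valuation (p (x ⊗ₜ 1)) ≤ V.valuation (p (y ⊗ₜ 1)) ↔ _
    rw [h, h]
    exact hφ x y
  · intro x y
    have h (x : A) : p (1 ⊗ₜ x) = ψ (algebraMap A M x) := by simp [p, g]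
    change V.valuation (p (1 ⊗ₜ x)) ≤ V.valuation (p (1 ⊗ₜ y)) ↔ _
    rw [h, h, ← hw', ← hw']
    exact hψ _ _
end

section
/- Let K be a field, A a nontrivial commutative K-algebra, L a Galois field extension of K, and v' : L → Γ'₀ a valuation. Let W₁ : L ⊗_K A → Δ₁ and W₂ : L ⊗_K A → Δ₂ be valuations whose restrictions to L (along x ↦ x ⊗ 1) are both equivalent to v', and whose restrictions to A (along a ↦ 1 ⊗ a) are equivalent to each other. Then there exists an element σ of the Galois group Gal(L/K) such that W₂ is equivalent to the valuation W₁ ∘ (σ ⊗ id_A) (the composition of W₁ with the K-algebra automorphism of L ⊗_K A induced by σ on the first factor). -/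
open scoped TensorProduct

/-!
The statement is an instance of a general principle: if a finite group `G` acts on a commutative
ring `B`, then two valuations of `B` that are equivalent on the fixed ring are conjugate under `G`
up to equivalence.

Call `W₂` *finer* than `W₁ ∘ g` if `W₂ a ≤ W₂ b` implies `W₁ (g a) ≤ W₁ (g b)`. The key point is
`lt_of_forall_smul_lt`: a pair with `W₁ (g b) < W₁ (g a)` for every `g`, and `W₂ b ≠ 0`, satisfies
`W₂ b < W₂ a`. Indeed, the leading coefficient of the binary form `∏ g, (g a X - g b Y)` strictly
dominates the other ones for `W₁`; the coefficients are `G`-invariant, so the same holds for `W₂`,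
and evaluating at the zero `(b, a)` of the form excludes `W₂ a ≤ W₂ b`.

If `W₂` were finer than no `W₁ ∘ g`, each `g` would have a pair `(a, b)` with `W₂ a ≤ W₂ b` and
`W₁ (g b) < W₁ (g a)`. Such pairs can be merged into one that works for all `g` (`exists_pair`):
for those `g` for which `W₁ ∘ g` has the support of `W₂`, add suitable powers of the fractions
`a / b`; the other supports are incomparable with that of `W₂`, by integrality of `B` over the
fixed ring, and are dealt with by prime avoidance. This contradicts the key point, so `W₂` is finer
than some `W₁ ∘ g`, and by symmetry `W₁` is finer than some `W₂ ∘ h`. As `h * g` has finite order,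
both comparisons are equivalences (`exists_smul_le_iff`).

For `E / K` finite Galois, the ring of invariants of `E ⊗ A` is `A` (average against an element of
trace `1`). An arbitrary Galois extension is the union of its finite Galois subextensions, and
compactness of the Krull topology glues the automorphisms found at the finite levels.
-/

namespace GaloisConjugateValuation

/-! ### Finite group actions -/

section Abstract

variable {B Δ₁ Δ₂ : Type*} [CommRing B]
  [LinearOrderedCommGroupWithZero Δ₁] [LinearOrderedCommGroupWithZero Δ₂]

section Group

variable {G : Type*} [Group G] [Fintype G] [MulSemiringAction G B]

/-- The coefficient of `X ^ j * Y ^ (|G| - j)` in the binary form `∏ g, (g • a * X - g • b * Y)`. -/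
noncomputable def formCoeff (G : Type*) [Group G] [Fintype G] [MulSemiringAction G B]
    (a b : B) (j : ℕ) : B :=
  open Classical in
  ∑ t ∈ Finset.powersetCard j (Finset.univ : Finset G),
    (∏ g ∈ t, g • a) * ∏ g ∈ Finset.univ \ t, -(g • b)

lemma smul_formCoeff (a b : B) (j : ℕ) (h : G) : h • formCoeff G a b j = formCoeff G a b j := by
  classical
  simp only [formCoeff, Finset.smul_sum, smul_mul', Finset.smul_prod', smul_neg, smul_smul]
  refine Finset.sum_equiv ((Equiv.mulLeft h).finsetCongr) ?_ ?_
  · intro t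
    simp [Finset.mem_powersetCard]
  · intro t _
    have : Finset.univ \ (Finset.map (Equiv.mulLeft h).toEmbedding t) =
        Finset.map (Equiv.mulLeft h).toEmbedding (Finset.univ \ t) := by
      ext x
      simp [Finset.mem_map_equiv]
    simp [this]

lemma formCoeff_card (a b : B) : formCoeff G a b (Fintype.card G) = ∏ g : G, g • a := by
  classical
  simp [formCoeff, ← Finset.card_univ, Finset.powersetCard_self]

lemma prod_eq_sum_formCoeff (a b x y : B) :
    ∏ g : G, (g • a * x - g • b * y) =
      ∑ j ∈ Finset.range (Fintype.card G + 1),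
        formCoeff G a b j * x ^ j * y ^ (Fintype.card G - j) := by
  classical
  simp only [sub_eq_add_neg, ← neg_mul]
  rw [Finset.prod_add, Finset.sum_powerset, Finset.card_univ]
  refine Finset.sum_congr rfl fun j _ => ?_
  rw [formCoeff, Finset.sum_mul, Finset.sum_mul]
  refine Finset.sum_congr rfl fun t ht => ?_
  rw [Finset.mem_powersetCard] at ht
  rw [Finset.prod_mul_distrib, Finset.prod_mul_distrib, Finset.prod_const, Finset.prod_const,
    Finset.card_sdiff_of_subset ht.1, ht.2, Finset.card_univ]
  ring

lemma map_formCoeff_lt (W : Valuation B Δ₁) {a b : B} (h : ∀ g : G, W (g • b) < W (g • a))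
    {j : ℕ} (hj : j < Fintype.card G) :
    W (formCoeff G a b j) < W (formCoeff G a b (Fintype.card G)) := by
  classical
  have hpos : ∀ g : G, 0 < W (g • a) := fun g => zero_le.trans_lt (h g)
  have hprod : ∀ t : Finset G, 0 < ∏ g ∈ t, W (g • a) := fun t =>
    zero_lt_iff.2 (Finset.prod_ne_zero_iff.2 fun g _ => (hpos g).ne')
  rw [formCoeff_card, map_prod]
  refine W.map_sum_lt (hprod _).ne' fun t ht => ?_
  rw [Finset.mem_powersetCard] at ht
  have hne : (Finset.univ \ t).Nonempty := by
    rw [← Finset.card_pos, Finset.card_sdiff_of_subset ht.1, ht.2, Finset.card_univ]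
    omega
  rw [← Finset.prod_sdiff (Finset.subset_univ t), mul_comm, map_mul, map_prod, map_prod]
  simp only [Valuation.map_neg]
  refine mul_lt_mul_of_pos_right ?_ (hprod t)
  obtain ⟨g₀, hg₀⟩ := hne
  rw [← Finset.mul_prod_erase _ _ hg₀, ← Finset.mul_prod_erase _ _ hg₀]
  exact (mul_le_mul_right (Finset.prod_le_prod' fun g _ => (h g).le) _).trans_lt
    (mul_lt_mul_of_pos_right (h g₀) (hprod _))

/-- If `b` is strictly below `a` for every conjugate of `W₁`, then it is strictly below `a` for every
valuation `W₂` that agrees with `W₁` on the invariants and does not vanish at `b`. -/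
lemma lt_of_forall_smul_lt (W₁ : Valuation B Δ₁) (W₂ : Valuation B Δ₂)
    (hfix : ∀ x y : B, (∀ g : G, g • x = x) → (∀ g : G, g • y = y) →
      (W₁ x ≤ W₁ y ↔ W₂ x ≤ W₂ y))
    {a b : B} (h : ∀ g : G, W₁ (g • b) < W₁ (g • a)) (hb : W₂ b ≠ 0) : W₂ b < W₂ a := by
  classical
  by_contra! hab
  have hc : ∀ j < Fintype.card G,
      W₂ (formCoeff G a b j) < W₂ (formCoeff G a b (Fintype.card G)) := fun j hj => by
    have := map_formCoeff_lt W₁ h hj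
    rw [← not_le] at this ⊢
    rwa [← hfix _ _ (smul_formCoeff a b _) (smul_formCoeff a b _)]
  have hzero : ∏ g : G, (g • a * b - g • b * a) = 0 :=
    Finset.prod_eq_zero (Finset.mem_univ 1) (by simp [mul_comm])
  rw [prod_eq_sum_formCoeff, Finset.sum_range_succ, Nat.sub_self, pow_zero, mul_one] at hzero
  have hn : W₂ (formCoeff G a b (Fintype.card G)) ≠ 0 :=
    (zero_le.trans_lt (hc 0 Fintype.card_pos)).ne'
  have hlt := W₂.map_sum_lt (s := Finset.range (Fintype.card G))
    (f := fun j => formCoeff G a b j * b ^ j * a ^ (Fintype.card G - j))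
    (g := W₂ (formCoeff G a b (Fintype.card G) * b ^ Fintype.card G))
    (by simp [hn, hb]) (fun j hj => by
      have hj := Finset.mem_range.1 hj
      calc W₂ (formCoeff G a b j * b ^ j * a ^ (Fintype.card G - j))
          = W₂ (formCoeff G a b j) * (W₂ b ^ j * W₂ a ^ (Fintype.card G - j)) := by
            simp [mul_assoc]
        _ ≤ W₂ (formCoeff G a b j) * (W₂ b ^ j * W₂ b ^ (Fintype.card G - j)) := by gcongr
        _ = W₂ (formCoeff G a b j) * W₂ b ^ Fintype.card G := by
            rw [← pow_add, Nat.add_sub_of_le hj.le]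
        _ < W₂ (formCoeff G a b (Fintype.card G)) * W₂ b ^ Fintype.card G :=
            mul_lt_mul_of_pos_right (hc j hj) (zero_lt_iff.2 (pow_ne_zero _ hb))
        _ = _ := by simp)
  rw [eq_neg_of_add_eq_zero_left hzero, Valuation.map_neg] at hlt
  exact lt_irrefl _ hlt

/-- Incomparability of primes over the fixed ring, which holds because `B` is integral over it. -/
lemma supp_eq_of_le (W₁ : Valuation B Δ₁) (W₂ : Valuation B Δ₂)
    (hfix : ∀ x : B, (∀ g : G, g • x = x) → (W₁ x = 0 ↔ W₂ x = 0))
    (hle : W₁.supp ≤ W₂.supp) : W₁.supp = W₂.supp := by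
  by_contra hne
  have hinv : Algebra.IsInvariant (FixedPoints.subring B G) B G := ⟨fun b hb => ⟨⟨b, hb⟩, rfl⟩⟩
  have hint : Algebra.IsIntegral (FixedPoints.subring B G) B :=
    Algebra.IsInvariant.isIntegral _ B G
  refine (Ideal.IsIntegral.comap_lt_comap (R := FixedPoints.subring B G)
    (lt_of_le_of_ne hle hne)).ne ?_
  ext x
  exact hfix x x.2

end Group

/-- Merging of pairs, thought of as fractions `a / b`, for valuations `w i` which do not vanish where
`W` does not: `c / d + (a / b) ^ n` is large wherever `c / d` or `a / b` is, as soon as `n` avoids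
the finitely many exponents for which the two terms could cancel. -/
lemma exists_pair_of_finset {ι : Type*} (w : ι → Valuation B Δ₁) (W : Valuation B Δ₂)
    (T : Finset ι) (hs : ∀ i ∈ T, ∀ x, W x ≠ 0 → w i x ≠ 0)
    (h : ∀ i ∈ T, ∃ a b, W b ≠ 0 ∧ W a ≤ W b ∧ w i b < w i a) :
    ∃ a b, W b ≠ 0 ∧ W a ≤ W b ∧ ∀ i ∈ T, w i b < w i a := by
  classical
  induction T using Finset.induction_on with
  | empty => exact ⟨0, 1, by simp⟩
  | insert k T hk ih =>
    obtain ⟨c, d, hd, hcd, hT⟩ := ih (fun i hi => hs i (Finset.mem_insert_of_mem hi))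
      (fun i hi => h i (Finset.mem_insert_of_mem hi))
    obtain ⟨a, b, hb, hab, hka⟩ := h k (Finset.mem_insert_self _ _)
    obtain ⟨n, hn⟩ : ∃ n : ℕ, n ∉ ({0} : Set ℕ) ∪ ⋃ i ∈ (insert k T : Finset ι),
        {n : ℕ | w i b < w i a ∧ w i (c * b ^ n) = w i (a ^ n * d)} := by
      refine Set.Finite.exists_notMem (Set.Finite.union (Set.finite_singleton 0)
        (Set.Finite.biUnion (Finset.finite_toSet _) fun i hi => Set.Subsingleton.finite ?_))
      have hd' := hs i hi d hd
      have hb' := hs i hi b hb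
      -- Since `w i b < w i a`, the ratios `(w i a / w i b) ^ n` are distinct.
      have key : ∀ m n : ℕ, w i b < w i a → w i (c * b ^ m) = w i (a ^ m * d) →
          w i (c * b ^ n) = w i (a ^ n * d) → ¬ m < n := by
        intro m n hlt hm hn hmn
        obtain ⟨l, rfl⟩ := Nat.exists_eq_add_of_lt hmn
        simp only [map_mul, map_pow] at hm hn
        have ha' : w i a ≠ 0 := (zero_le.trans_lt hlt).ne'
        have h0 : w i a ^ m * w i d ≠ 0 := mul_ne_zero (pow_ne_zero _ ha') hd'
        have : w i a ^ m * w i d * w i b ^ (l + 1) = w i a ^ m * w i d * w i a ^ (l + 1) := by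
          rw [← hm, mul_assoc, ← pow_add, ← add_assoc, hn, hm, add_assoc, pow_add]
          ac_rfl
        exact (pow_lt_pow_left₀ hlt zero_le (Nat.succ_ne_zero l)).ne (mul_left_cancel₀ h0 this)
      rintro m ⟨hlt, hm⟩ n ⟨-, hn⟩
      exact le_antisymm (not_lt.1 (key n m hlt hn hm)) (not_lt.1 (key m n hlt hm hn))
    simp only [Set.mem_union, Set.mem_singleton_iff, Set.mem_iUnion, Set.mem_ofPred_eq,
      not_or, not_exists, not_and] at hn
    obtain ⟨hn0, hn⟩ := hn
    refine ⟨c * b ^ n + a ^ n * d, d * b ^ n, by simp [hd, hb], ?_, fun i hi => ?_⟩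
    · refine W.map_add_le ?_ ?_
      · simp only [map_mul, map_pow]; gcongr
      · simp only [map_mul, map_pow]; rw [mul_comm]; gcongr
    · have hd' := zero_lt_iff.2 (hs i hi d hd)
      have hb' := zero_lt_iff.2 (pow_ne_zero n (hs i hi b hb))
      by_cases hlt : w i b < w i a
      · rw [(w i).map_add_of_distinct_val (hn i hi hlt)]
        refine lt_max_of_lt_right ?_
        simp only [map_mul, map_pow]
        rw [mul_comm]
        exact mul_lt_mul_of_pos_right (pow_lt_pow_left₀ hlt zero_le hn0) hd'
      · have hiT : i ∈ T := (Finset.mem_insert.1 hi).resolve_left (by rintro rfl; exact hlt hka)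
        have h1 : w i (d * b ^ n) < w i (c * b ^ n) := by
          simp only [map_mul, map_pow]
          exact mul_lt_mul_of_pos_right (hT i hiT) hb'
        have h2 : w i (a ^ n * d) ≤ w i (d * b ^ n) := by
          simp only [map_mul, map_pow]
          rw [mul_comm]
          have := not_lt.1 hlt
          gcongr
        rwa [(w i).map_add_eq_of_lt_left (h2.trans_lt h1)]

/-- Merging of pairs for finitely many valuations whose supports equal that of `W` or are
incomparable with it. -/
lemma exists_pair {ι : Type*} [Fintype ι] (w : ι → Valuation B Δ₁) (W : Valuation B Δ₂)
    (hle : ∀ i, (w i).supp ≤ W.supp → (w i).supp = W.supp)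
    (hge : ∀ i, W.supp ≤ (w i).supp → W.supp = (w i).supp)
    (h : ∀ i, ∃ a b, W a ≤ W b ∧ w i b < w i a) :
    ∃ a b, W b ≠ 0 ∧ W a ≤ W b ∧ ∀ i, w i b < w i a := by
  classical
  set T : Finset ι := Finset.univ.filter fun i => (w i).supp = W.supp with hTdef
  have hT : ∀ i ∈ T, ∀ x, w i x = 0 ↔ W x = 0 := fun i hi x => by
    rw [← Valuation.mem_supp_iff, ← Valuation.mem_supp_iff, (Finset.mem_filter.1 hi).2]
  obtain ⟨a, b, hb, hab, hi⟩ := exists_pair_of_finset w W T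
    (fun i hi x hx => mt (hT i hi x).1 hx) (fun i hi => by
      obtain ⟨a, b, hab, hlt⟩ := h i
      refine ⟨a, b, fun hb => ?_, hab, hlt⟩
      have ha : w i a = 0 := (hT i hi a).2 (by simpa [hb] using hab)
      simp [ha] at hlt)
  -- The product of the `e i` makes the denominator vanish for `w i`, `i ∉ T`; adding `f`, which
  -- `W` and the `w i` with `i ∈ T` do not see, keeps the numerator nonzero there.
  have he : ∀ i ∈ Tᶜ, ∃ e, w i e = 0 ∧ W e ≠ 0 := fun i hi => by
    have : ¬ (w i).supp ≤ W.supp := fun hh => by simp [hTdef, hle i hh] at hi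
    simpa [SetLike.not_le_iff_exists, Valuation.mem_supp_iff] using this
  choose! e he0 heW using he
  obtain ⟨f, hfW, hf⟩ : ∃ f, W f = 0 ∧ ∀ i ∈ Tᶜ, w i f ≠ 0 := by
    by_contra! hcon
    have hsub : (W.supp : Set B) ⊆ ⋃ i ∈ (↑(Tᶜ) : Set ι), ((w i).supp : Set B) := fun x hx => by
      obtain ⟨i, hi, hi'⟩ := hcon x ((Valuation.mem_supp_iff _ _).1 hx)
      exact Set.mem_biUnion (Finset.mem_coe.2 hi) ((Valuation.mem_supp_iff _ _).2 hi')
    rcases isEmpty_or_nonempty ι with hι | ⟨⟨i₀⟩⟩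
    · have := hsub (W.supp.zero_mem)
      simp at this
    obtain ⟨i, hi, hi'⟩ := (Ideal.subset_union_prime i₀ i₀
      (fun i _ _ _ => inferInstance)).1 hsub
    simp [hTdef, (hge i hi').symm] at hi
  have hE : W (∏ i ∈ Tᶜ, e i) ≠ 0 := by
    rw [map_prod]
    exact Finset.prod_ne_zero_iff.2 heW
  refine ⟨(∏ i ∈ Tᶜ, e i) * a + f, (∏ i ∈ Tᶜ, e i) * b, ?_, ?_, fun i => ?_⟩
  · rw [map_mul]; exact mul_ne_zero hE hb
  · refine W.map_add_le ?_ (by simp [hfW])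
    simp only [map_mul]
    gcongr
  · by_cases hiT : i ∈ T
    · have hlt : w i ((∏ i ∈ Tᶜ, e i) * b) < w i ((∏ i ∈ Tᶜ, e i) * a) := by
        rw [map_mul, map_mul]
        exact mul_lt_mul_of_pos_left (hi i hiT) (zero_lt_iff.2 (mt (hT i hiT _).1 hE))
      rwa [(w i).map_add_eq_of_lt_left]
      rw [(hT i hiT f).2 hfW]
      exact zero_le.trans_lt hlt
    · have hiT := Finset.mem_compl.2 hiT
      have h0 : w i (∏ i ∈ Tᶜ, e i) = 0 := by
        rw [map_prod]
        exact Finset.prod_eq_zero hiT (he0 i hiT)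
      rw [(w i).map_add_eq_of_lt_right] <;> simp [h0, zero_lt_iff, hf i hiT]

variable {G : Type*} [Group G] [Finite G] [MulSemiringAction G B]

/-- One direction of the conjugacy: some conjugate of `W₁` is coarser than `W₂`. -/
lemma exists_smul_le (W₁ : Valuation B Δ₁) (W₂ : Valuation B Δ₂)
    (hfix : ∀ x y : B, (∀ g : G, g • x = x) → (∀ g : G, g • y = y) →
      (W₁ x ≤ W₁ y ↔ W₂ x ≤ W₂ y)) :
    ∃ g : G, ∀ a b, W₂ a ≤ W₂ b → W₁ (g • a) ≤ W₁ (g • b) := by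
  cases nonempty_fintype G
  by_contra! hcon
  let w : G → Valuation B Δ₁ := fun g => W₁.comap (MulSemiringAction.toRingHom G B g)
  have hw : ∀ g x, w g x = W₁ (g • x) := fun g x => rfl
  have hz : ∀ (g : G) (x : B), (∀ g : G, g • x = x) → (w g x = 0 ↔ W₂ x = 0) := fun g x hx => by
    simpa [hw, hx g] using hfix x 0 hx (fun g => smul_zero g)
  obtain ⟨a, b, hb, hab, hlt⟩ := exists_pair w W₂
    (fun g => supp_eq_of_le (G := G) _ _ (hz g))
    (fun g => supp_eq_of_le (G := G) _ _ fun x hx => (hz g x hx).symm) hcon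
  exact (lt_of_forall_smul_lt W₁ W₂ hfix hlt hb).not_ge hab

/-- Valuations which are equivalent on the invariants of a finite group are conjugate under it, up
to equivalence. -/
theorem exists_smul_le_iff (W₁ : Valuation B Δ₁) (W₂ : Valuation B Δ₂)
    (hfix : ∀ x y : B, (∀ g : G, g • x = x) → (∀ g : G, g • y = y) →
      (W₁ x ≤ W₁ y ↔ W₂ x ≤ W₂ y)) :
    ∃ g : G, ∀ a b, W₂ a ≤ W₂ b ↔ W₁ (g • a) ≤ W₁ (g • b) := by
  obtain ⟨g, hg⟩ := exists_smul_le W₁ W₂ hfix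
  obtain ⟨h, hh⟩ := exists_smul_le W₂ W₁ fun x y hx hy => (hfix x y hx hy).symm
  refine ⟨g, fun a b => ⟨hg a b, fun hab => ?_⟩⟩
  have hpow : ∀ (n : ℕ) (x y : B), W₂ x ≤ W₂ y → W₂ ((h * g) ^ n • x) ≤ W₂ ((h * g) ^ n • y) := by
    intro n
    induction n with
    | zero => simp
    | succ n ih =>
      intro x y hxy
      have := hh _ _ (hg _ _ (ih x y hxy))
      simpa only [pow_succ', mul_smul] using this
  have := hpow (orderOf (h * g) - 1) _ _ (hh _ _ hab)
  simp only [smul_smul] at this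
  rwa [← pow_succ, Nat.sub_add_cancel (orderOf_pos _), pow_orderOf_eq_one, one_smul,
    one_smul] at this

end Abstract

/-! ### Tensor products with Galois extensions -/

section Tensor

variable {K : Type*} [Field K]

/-- The action of `Gal(E/K)` on `E ⊗ A` through the first factor. -/
noncomputable abbrev tensorAction (K E A : Type*) [Field K] [Field E] [Algebra K E]
    [CommRing A] [Algebra K A] : MulSemiringAction (E ≃ₐ[K] E) (E ⊗[K] A) where
  smul g x := Algebra.TensorProduct.map g.toAlgHom (AlgHom.id K A) x
  one_smul x := by
    change Algebra.TensorProduct.map (AlgHom.id K E) (AlgHom.id K A) x = x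
    simp
  mul_smul g h x := by
    change Algebra.TensorProduct.map (g * h).toAlgHom (AlgHom.id K A) x =
      Algebra.TensorProduct.map g.toAlgHom (AlgHom.id K A)
        (Algebra.TensorProduct.map h.toAlgHom (AlgHom.id K A) x)
    rw [← AlgHom.comp_apply, ← Algebra.TensorProduct.map_comp]
    rfl
  smul_zero g := map_zero _
  smul_add g := map_add _
  smul_one g := map_one _
  smul_mul g := map_mul _

/-- The Galois invariants of `E ⊗ A` are `A`: an invariant `x` is the trace of `(c ⊗ 1) * x`, where
`c` has trace `1`, and traces lie in `1 ⊗ A`. -/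
lemma exists_includeRight_eq {E A : Type*} [Field E] [Algebra K E] [FiniteDimensional K E]
    [IsGalois K E] [CommRing A] [Algebra K A] (x : E ⊗[K] A)
    (hx : ∀ g : E ≃ₐ[K] E, Algebra.TensorProduct.map g.toAlgHom (AlgHom.id K A) x = x) :
    ∃ a : A, (1 : E) ⊗ₜ[K] a = x := by
  have htr : ∀ y : E ⊗[K] A, ∃ a : A, (1 : E) ⊗ₜ[K] a =
      ∑ g : E ≃ₐ[K] E, Algebra.TensorProduct.map g.toAlgHom (AlgHom.id K A) y := by
    intro y
    induction y with
    | zero => exact ⟨0, by simp⟩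
    | tmul e a =>
      refine ⟨Algebra.trace K E e • a, ?_⟩
      rw [← TensorProduct.smul_tmul, ← Algebra.algebraMap_eq_smul_one, trace_eq_sum_automorphisms,
        TensorProduct.sum_tmul]
      simp
    | add y z hy hz =>
      obtain ⟨a, ha⟩ := hy
      obtain ⟨b, hb⟩ := hz
      exact ⟨a + b, by simp only [TensorProduct.tmul_add, ha, hb, map_add, Finset.sum_add_distrib]⟩
  obtain ⟨c, hc⟩ := Algebra.trace_surjective K E 1
  obtain ⟨a, ha⟩ := htr (c ⊗ₜ[K] 1 * x)
  refine ⟨a, ha.trans ?_⟩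
  simp only [map_mul, hx, ← Finset.sum_mul]
  have : ∑ g : E ≃ₐ[K] E, Algebra.TensorProduct.map g.toAlgHom (AlgHom.id K A) (c ⊗ₜ[K] (1 : A)) =
      1 := by
    have h1 := trace_eq_sum_automorphisms (K := K) c
    rw [hc, map_one] at h1
    simp [← TensorProduct.sum_tmul, ← h1, Algebra.TensorProduct.one_def]
  rw [this, one_mul]

variable {L A : Type*} [Field L] [Algebra K L] [CommRing A] [Algebra K A]
  {Δ₁ Δ₂ : Type*} [LinearOrderedCommGroupWithZero Δ₁] [LinearOrderedCommGroupWithZero Δ₂]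

theorem exists_finite_level {E : Type*} [Field E] [Algebra K E] [FiniteDimensional K E]
    [IsGalois K E] (W₁ : Valuation (E ⊗[K] A) Δ₁) (W₂ : Valuation (E ⊗[K] A) Δ₂)
    (h : ∀ a b : A, W₁ (1 ⊗ₜ a) ≤ W₁ (1 ⊗ₜ b) ↔ W₂ (1 ⊗ₜ a) ≤ W₂ (1 ⊗ₜ b)) :
    ∃ g : E ≃ₐ[K] E, ∀ x y, W₂ x ≤ W₂ y ↔
      W₁ (Algebra.TensorProduct.map g.toAlgHom (AlgHom.id K A) x) ≤
        W₁ (Algebra.TensorProduct.map g.toAlgHom (AlgHom.id K A) y) := by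
  let := tensorAction K E A
  refine exists_smul_le_iff (G := E ≃ₐ[K] E) W₁ W₂ fun x y hx hy => ?_
  obtain ⟨a, rfl⟩ := exists_includeRight_eq x hx
  obtain ⟨b, rfl⟩ := exists_includeRight_eq y hy
  exact h a b

/-- The map `E ⊗ A → L ⊗ A` induced by the inclusion of an intermediate field. -/
noncomputable abbrev incl (A : Type*) [CommRing A] [Algebra K A] (E : IntermediateField K L) :
    E ⊗[K] A →ₐ[K] L ⊗[K] A :=
  Algebra.TensorProduct.map E.val (AlgHom.id K A)

lemma map_incl (E : IntermediateField K L) [Normal K E] (σ : L ≃ₐ[K] L) (x : E ⊗[K] A) :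
    Algebra.TensorProduct.map σ.toAlgHom (AlgHom.id K A) (incl A E x) =
      incl A E (Algebra.TensorProduct.map (AlgEquiv.restrictNormalHom E σ).toAlgHom
        (AlgHom.id K A) x) := by
  induction x with
  | zero => simp
  | tmul e a =>
    have : σ e = ((AlgEquiv.restrictNormalHom E σ) e : E) :=
      (AlgEquiv.restrictNormal_commutes σ E e).symm
    simp [this]
  | add x y hx hy => simp only [map_add, hx, hy]

lemma range_incl_mono {E F : IntermediateField K L} (h : E ≤ F) (x : E ⊗[K] A) :
    ∃ y, incl A F y = incl A E x := by
  refine ⟨Algebra.TensorProduct.map (IntermediateField.inclusion h) (AlgHom.id K A) x, ?_⟩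
  rw [← AlgHom.comp_apply, ← Algebra.TensorProduct.map_comp]
  rfl

lemma exists_mem_range_incl [IsGalois K L] (x : L ⊗[K] A) :
    ∃ (E : FiniteGaloisIntermediateField K L) (y : E ⊗[K] A),
      incl A E.toIntermediateField y = x := by
  induction x with
  | zero => exact ⟨⊥, 0, map_zero _⟩
  | tmul l a =>
    exact ⟨FiniteGaloisIntermediateField.adjoin K {l},
      ⟨l, FiniteGaloisIntermediateField.subset_adjoin K {l} rfl⟩ ⊗ₜ a, rfl⟩
  | add x₁ x₂ h₁ h₂ =>
    obtain ⟨E₁, y₁, rfl⟩ := h₁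
    obtain ⟨E₂, y₂, rfl⟩ := h₂
    obtain ⟨z₁, h₁⟩ := range_incl_mono (F := (E₁ ⊔ E₂).toIntermediateField)
      (le_sup_left : E₁ ≤ E₁ ⊔ E₂) y₁
    obtain ⟨z₂, h₂⟩ := range_incl_mono (F := (E₁ ⊔ E₂).toIntermediateField)
      (le_sup_right : E₂ ≤ E₁ ⊔ E₂) y₂
    exact ⟨E₁ ⊔ E₂, z₁ + z₂, by rw [map_add, h₁, h₂]⟩

/-- Conjugacy over an arbitrary Galois extension. -/
theorem exists_galois [IsGalois K L] (W₁ : Valuation (L ⊗[K] A) Δ₁) (W₂ : Valuation (L ⊗[K] A) Δ₂)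
    (h : ∀ a b : A, W₁ (1 ⊗ₜ a) ≤ W₁ (1 ⊗ₜ b) ↔ W₂ (1 ⊗ₜ a) ≤ W₂ (1 ⊗ₜ b)) :
    ∃ g : L ≃ₐ[K] L, ∀ x y, W₂ x ≤ W₂ y ↔
      W₁ (Algebra.TensorProduct.map g.toAlgHom (AlgHom.id K A) x) ≤
        W₁ (Algebra.TensorProduct.map g.toAlgHom (AlgHom.id K A) y) := by
  -- `C E` consists of the automorphisms that conjugate the valuations on the subring `E ⊗ A`. It is
  -- the preimage of a subset of the discrete group `Gal(E/K)`, hence closed.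
  let D (E : FiniteGaloisIntermediateField K L) : Set (E ≃ₐ[K] E) :=
    {g | ∀ x y, W₂ (incl A E.toIntermediateField x) ≤ W₂ (incl A E.toIntermediateField y) ↔
      W₁ (incl A E.toIntermediateField
        (Algebra.TensorProduct.map g.toAlgHom (AlgHom.id K A) x)) ≤
      W₁ (incl A E.toIntermediateField
        (Algebra.TensorProduct.map g.toAlgHom (AlgHom.id K A) y))}
  let C (E : FiniteGaloisIntermediateField K L) : Set (L ≃ₐ[K] L) :=
    AlgEquiv.restrictNormalHom E.toIntermediateField ⁻¹' D E
  have hC : ∀ E σ, σ ∈ C E ↔ ∀ x y,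
      W₂ (incl A E.toIntermediateField x) ≤ W₂ (incl A E.toIntermediateField y) ↔
      W₁ (Algebra.TensorProduct.map σ.toAlgHom (AlgHom.id K A)
        (incl A E.toIntermediateField x)) ≤
      W₁ (Algebra.TensorProduct.map σ.toAlgHom (AlgHom.id K A)
        (incl A E.toIntermediateField y)) := fun E σ => by
    simp only [map_incl]
    rfl
  have hanti : Antitone C := fun E F hEF σ hσ => by
    rw [hC] at hσ ⊢
    intro x y
    obtain ⟨x', hx⟩ := range_incl_mono (F := F.toIntermediateField) hEF x
    obtain ⟨y', hy⟩ := range_incl_mono (F := F.toIntermediateField) hEF y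
    rw [← hx, ← hy]
    exact hσ x' y'
  have hclosed : ∀ E, IsClosed (C E) := fun E =>
    (isClosed_discrete (D E)).preimage
      (InfiniteGalois.restrictNormalHom_continuous E.toIntermediateField)
  have hne : ∀ E, (C E).Nonempty := fun E => by
    obtain ⟨g, hg⟩ := exists_finite_level
      (W₁.comap (incl A E.toIntermediateField).toRingHom)
      (W₂.comap (incl A E.toIntermediateField).toRingHom)
      (fun a b => by simpa using h a b)
    obtain ⟨σ, rfl⟩ := AlgEquiv.restrictNormalHom_surjective (F := K) (K₁ := E) L g
    exact ⟨σ, hg⟩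
  obtain ⟨σ, hσ⟩ := IsCompact.nonempty_iInter_of_directed_nonempty_isCompact_isClosed C
    hanti.directed_ge hne (fun E => (hclosed E).isCompact) hclosed
  refine ⟨σ, fun x y => ?_⟩
  obtain ⟨E₁, x₁, rfl⟩ := exists_mem_range_incl x
  obtain ⟨E₂, y₁, rfl⟩ := exists_mem_range_incl y
  obtain ⟨x₂, hx⟩ := range_incl_mono (F := (E₁ ⊔ E₂).toIntermediateField)
    (le_sup_left : E₁ ≤ E₁ ⊔ E₂) x₁
  obtain ⟨y₂, hy⟩ := range_incl_mono (F := (E₁ ⊔ E₂).toIntermediateField)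
    (le_sup_right : E₂ ≤ E₁ ⊔ E₂) y₁
  rw [← hx, ← hy]
  exact (hC _ σ).1 (Set.mem_iInter.1 hσ (E₁ ⊔ E₂)) x₂ y₂

end Tensor

end GaloisConjugateValuation

/-- Let `A` be a nontrivial commutative `K`-algebra, `L` a Galois extension of `K`, and `v'` a
valuation on `L`.  If two valuations `W₁`, `W₂` on `L ⊗[K] A` both restrict on `L` to valuations
equivalent to `v'`, and their restrictions to `A` are equivalent to each other, then `W₂` is
obtained from `W₁`, up to equivalence, by twisting by an element of the Galois group
`Gal(L/K)` acting on the first tensor factor. -/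
theorem valuation_on_tensor_galois_conjugate
    {K L A : Type*} [Field K] [Field L] [Algebra K L] [IsGalois K L]
    [CommRing A] [Nontrivial A] [Algebra K A]
    {Γ'₀ Δ₁ Δ₂ : Type*} [LinearOrderedCommGroupWithZero Γ'₀]
    [LinearOrderedCommGroupWithZero Δ₁] [LinearOrderedCommGroupWithZero Δ₂]
    (v' : Valuation L Γ'₀)
    (W₁ : Valuation (L ⊗[K] A) Δ₁) (W₂ : Valuation (L ⊗[K] A) Δ₂)
    (h₁ : (W₁.comap (Algebra.TensorProduct.includeLeft (R := K) (S := K) (A := L)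
      (B := A)).toRingHom).IsEquiv v')
    (h₂ : (W₂.comap (Algebra.TensorProduct.includeLeft (R := K) (S := K) (A := L)
      (B := A)).toRingHom).IsEquiv v')
    (h₁₂ : (W₁.comap (Algebra.TensorProduct.includeRight (R := K) (A := L)
        (B := A)).toRingHom).IsEquiv
      (W₂.comap (Algebra.TensorProduct.includeRight (R := K) (A := L) (B := A)).toRingHom)) :
    ∃ σ : L ≃ₐ[K] L,
      W₂.IsEquiv (W₁.comap
        (Algebra.TensorProduct.map σ.toAlgHom (AlgHom.id K A)).toRingHom) := by
  exact GaloisConjugateValuation.exists_galois W₁ W₂ fun a b => h₁₂ a b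
end

section
/- Let K be an algebraically closed field, v : K → Γ₀ a valuation, and A a nontrivial commutative K-algebra that is finite dimensional as a K-vector space. Then: (a) for every prime ideal p of A there exist a linearly ordered commutative group with zero Δ₀ and a valuation w : A → Δ₀ with support p (that is, {a ∈ A : w(a) = 0} = p) whose restriction to K is equivalent to v; (b) any two valuations on A whose restrictions to K are equivalent to v and which have the same support are equivalent to each other. Hence the support map induces a bijection between equivalence classes of valuations on A extending v and the prime spectrum of A. -/
/-!
Since `A` is finite over `K`, each residue domain `A ⧸ p` is integral over the algebraically closed
field `K`, so `K → A ⧸ p` is an isomorphism: every element of `A` is congruent to a constant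
modulo `p`. For existence, `v` is pulled back along `A → A ⧸ p ≃ K`. For uniqueness, a valuation
does not change when an element is translated by the support, so its values are those of the
congruent constants, and the comparison of values is dictated by `v`.
-/

theorem algebraMap_quotient_prime_bijective {K A : Type*} [Field K] [IsAlgClosed K] [CommRing A]
    [Algebra K A] [FiniteDimensional K A] (p : Ideal A) [p.IsPrime] :
    Function.Bijective (algebraMap K (A ⧸ p)) :=
  IsAlgClosed.algebraMap_bijective_of_isIntegral

theorem exists_sub_algebraMap_mem_prime (K : Type*) {A : Type*} [Field K] [IsAlgClosed K]
    [CommRing A] [Algebra K A] [FiniteDimensional K A] (p : Ideal A) [p.IsPrime] (a : A) :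
    ∃ k : K, a - algebraMap K A k ∈ p := by
  obtain ⟨k, hk⟩ := (algebraMap_quotient_prime_bijective (K := K) p).2 (Ideal.Quotient.mk p a)
  exact ⟨k, Ideal.Quotient.eq.mp hk.symm⟩

theorem Valuation.map_eq_of_sub_mem_supp {R Γ : Type*} [CommRing R]
    [LinearOrderedCommGroupWithZero Γ] (w : Valuation R Γ) {a b : R} (h : a - b ∈ w.supp) :
    w a = w b := by
  simpa using w.map_add_supp b h

/-- Let `K` be an algebraically closed field with a valuation `v`, and `A` a nontrivial finite
dimensional commutative `K`-algebra.  Then (a) every prime ideal `p` of `A` is the support of a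
valuation on `A` extending `v` (up to equivalence), and (b) two valuations on `A` extending `v`
(up to equivalence) with the same support are equivalent.  Hence the equivalence classes of
prolongations of `v` to `A` correspond exactly to the points of `Spec A`. -/
theorem valuation_extensions_finite_algebra_biject_spec
    {K A Γ₀ : Type u} [Field K] [IsAlgClosed K] [CommRing A] [Nontrivial A]
    [Algebra K A] [FiniteDimensional K A] [LinearOrderedCommGroupWithZero Γ₀]
    (v : Valuation K Γ₀) :
    (∀ p : Ideal A, p.IsPrime →
      ∃ (Δ₀ : Type u) (_ : LinearOrderedCommGroupWithZero Δ₀) (w : Valuation A Δ₀),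
        w.supp = p ∧ (w.comap (algebraMap K A)).IsEquiv v) ∧
    (∀ (Δ₁ : Type u₁) (Δ₂ : Type u₂) (_ : LinearOrderedCommGroupWithZero Δ₁)
        (_ : LinearOrderedCommGroupWithZero Δ₂)
        (w₁ : Valuation A Δ₁) (w₂ : Valuation A Δ₂),
      (w₁.comap (algebraMap K A)).IsEquiv v → (w₂.comap (algebraMap K A)).IsEquiv v →
      w₁.supp = w₂.supp → w₁.IsEquiv w₂) := by
  refine ⟨fun p hp => ?_, fun Δ₁ Δ₂ _ _ w₁ w₂ h₁ h₂ hs a b => ?_⟩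
  · let e : K ≃+* A ⧸ p :=
      RingEquiv.ofBijective (algebraMap K (A ⧸ p)) (algebraMap_quotient_prime_bijective p)
    refine ⟨Γ₀, inferInstance, v.comap ((e.symm : A ⧸ p →+* K).comp (Ideal.Quotient.mk p)), ?_, ?_⟩
    · ext a
      simp [Valuation.mem_supp_iff, Ideal.Quotient.eq_zero_iff_mem]
    · have key (k : K) : e.symm (algebraMap K (A ⧸ p) k) = k :=
        e.symm_apply_apply k
      intro x y
      simp [key]
  · obtain ⟨x, hx⟩ := exists_sub_algebraMap_mem_prime K w₁.supp a
    obtain ⟨y, hy⟩ := exists_sub_algebraMap_mem_prime K w₁.supp b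
    have hx' : a - algebraMap K A x ∈ w₂.supp := hs ▸ hx
    have hy' : b - algebraMap K A y ∈ w₂.supp := hs ▸ hy
    rw [w₁.map_eq_of_sub_mem_supp hx, w₁.map_eq_of_sub_mem_supp hy,
      w₂.map_eq_of_sub_mem_supp hx', w₂.map_eq_of_sub_mem_supp hy']
    exact (h₁.trans h₂.symm) x y
end
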